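/- arXiv:2203.01360 — 4 statements merged into one kernel-verified Lean document; each statement's English description precedes it below -/
import Mathlib

section
/- Let t ∈ ℝ and suppose u(t) = U(θ(t)). Define E(h) = R(u(t+h), U(θ(t+h))). Then the limit lim_{h→0} h⁻² E(h) exists and equals ½ θ̇ᵀ M θ̇ + F · θ̇ + ½ b, where θ̇ = θ′(t) ∈ ℝᵖ, M ∈ ℝ^{p×p} has entries M_{ij} = D²R(p₀)((0, ∂_{θ_i}U(θ(t))), (0, ∂_{θ_j}U(θ(t)))), F ∈ ℝᵖ has entries F_i = D²R(p₀)((f, 0), (0, ∂_{θ_i}U(θ(t)))), and b = D²R(p₀)((f, 0), (f, 0)). -/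
/-!
Since `R` and `DR` vanish at `p₀ = (u t, u t)`, the second-order Taylor expansion of `R` reduces to
`R x = ½ D²R(p₀)(x - p₀, x - p₀) + o(‖x - p₀‖²)`. Along the curve `x(h) = (u (t+h), U (θ (t+h)))`,
which passes through `p₀` at `h = 0` with velocity `v = (f, DU(θ t) θ̇)`, dividing by `h²` gives the
limit `½ D²R(p₀)(v, v)`. Writing `v = (f, 0) + ∑ i, θ̇ᵢ • (0, ∂ᵢU)` and expanding by bilinearity and
symmetry yields the stated quadratic form.

The expansion with Peano remainder (`isLittleO_sub_half_fderiv_fderiv`) follows from the mean value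
inequality applied to the remainder `g x = R x - ½ D²R(p₀)(x - p₀, x - p₀)`, whose derivative is
`o(‖x - p₀‖)` because `DR` is differentiable at `p₀`.
-/

open Filter Topology Asymptotics

/-- Second-order Taylor expansion with Peano remainder at a point where the function and its first
derivative vanish. -/
lemma isLittleO_sub_half_fderiv_fderiv {E : Type*} [NormedAddCommGroup E] [NormedSpace ℝ E]
    {R : E → ℝ} {a : E} (hR : ContDiffAt ℝ 2 R a) (h0 : R a = 0) (h1 : fderiv ℝ R a = 0) :
    (fun x => R x - (1 / 2) * fderiv ℝ (fderiv ℝ R) a (x - a) (x - a))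
      =o[𝓝 a] fun x => ‖x - a‖ ^ 2 := by
  have hsymm : IsSymmSndFDerivAt ℝ R a := hR.isSymmSndFDerivAt (by simp)
  have hdiff : DifferentiableAt ℝ (fderiv ℝ R) a :=
    (hR.fderiv_right (m := 1) (by norm_num)).differentiableAt (by norm_num)
  have hRd : ∀ᶠ x in 𝓝 a, DifferentiableAt ℝ R x :=
    (hR.eventually (by simp)).mono fun x hx => hx.differentiableAt (by norm_num)
  have hlo := hdiff.hasFDerivAt.isLittleO
  set B := fderiv ℝ (fderiv ℝ R) a with hB
  rw [isLittleO_iff]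
  intro c hc
  obtain ⟨ε, hε, hball⟩ := Metric.eventually_nhds_iff_ball.1 (hRd.and (isLittleO_iff.1 hlo hc))
  filter_upwards [Metric.ball_mem_nhds a hε] with x hx
  have hder : ∀ y ∈ Metric.ball a ε,
      HasFDerivAt (fun x => R x - (1 / 2) * B (x - a) (x - a)) (fderiv ℝ R y - B (y - a)) y := by
    intro y hy
    have hid : HasFDerivAt (fun x : E => x - a) (ContinuousLinearMap.id ℝ E) y :=
      (hasFDerivAt_id y).sub_const a
    have hq := ((B.hasFDerivAt.comp y hid).clm_apply hid).const_mul (1 / 2 : ℝ)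
    refine ((hball y hy).1.hasFDerivAt.sub hq).congr_fderiv ?_
    ext w
    have hs : B w (y - a) = B (y - a) w := hsymm w (y - a)
    simp [-map_sub, hs]
    ring
  have hsub : Metric.closedBall a ‖x - a‖ ⊆ Metric.ball a ε := by
    apply Metric.closedBall_subset_ball
    rwa [← dist_eq_norm]
  have hmv := (convex_closedBall a ‖x - a‖).norm_image_sub_le_of_norm_hasFDerivWithin_le
    (C := c * ‖x - a‖) (x := a) (y := x)
    (fun y hy => (hder y (hsub hy)).hasFDerivWithinAt)
    (fun y hy => by
      have h := (hball y (hsub hy)).2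
      rw [h1, sub_zero] at h
      refine h.trans ?_
      gcongr
      simpa [dist_eq_norm] using hy)
    (by simp) (by simp [dist_eq_norm])
  simpa [-map_sub, h0, pow_two, mul_assoc] using hmv


/-- second-order expansion of the instantaneous loss
`E(h) = R(u(t+h), U(θ(t+h)))` around an exactly representable state. -/
theorem stmt_0
    {H : Type*} [NormedAddCommGroup H] [NormedSpace ℝ H]
    {p : ℕ} (t : ℝ)
    (θ : ℝ → EuclideanSpace ℝ (Fin p)) (hθ : DifferentiableAt ℝ θ t)
    (U : EuclideanSpace ℝ (Fin p) → H) (hU : DifferentiableAt ℝ U (θ t))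
    (u : ℝ → H) (hu : DifferentiableAt ℝ u t)
    (hrep : u t = U (θ t))
    (R : H × H → ℝ)
    (hR : ContDiffAt ℝ 2 R (u t, u t))
    (hR0 : R (u t, u t) = 0)
    (hDR : fderiv ℝ R (u t, u t) = 0)
    (θdot : EuclideanSpace ℝ (Fin p)) (hθdot : θdot = deriv θ t)
    (f : H) (hf : f = deriv u t)
    (D2R : (H × H) →L[ℝ] (H × H) →L[ℝ] ℝ)
    (hD2R : D2R = fderiv ℝ (fderiv ℝ R) (u t, u t))
    (dU : Fin p → H)
    (hdU : ∀ i, dU i = fderiv ℝ U (θ t) (EuclideanSpace.single i 1))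
    (M : Matrix (Fin p) (Fin p) ℝ)
    (hM : ∀ i j, M i j = D2R (0, dU i) (0, dU j))
    (F : Fin p → ℝ)
    (hF : ∀ i, F i = D2R (f, 0) (0, dU i))
    (b : ℝ) (hb : b = D2R (f, 0) (f, 0)) :
    Tendsto (fun h : ℝ => (h ^ 2)⁻¹ * R (u (t + h), U (θ (t + h))))
      (𝓝[≠] (0 : ℝ))
      (𝓝 ((1 / 2) * (∑ i, ∑ j, θdot i * M i j * θdot j)
            + (∑ i, F i * θdot i) + (1 / 2) * b)) := by
  have hD2 : IsSymmSndFDerivAt ℝ R (u t, u t) := hR.isSymmSndFDerivAt (by simp)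
  set v : H := fderiv ℝ U (θ t) θdot with hv
  set X : ℝ → H × H := fun h => (u (t + h), U (θ (t + h))) with hX
  have hX0 : X 0 = (u t, u t) := by simp [hX, hrep]
  have hXd : HasDerivAt X (f, v) 0 := by
    have h1 : HasDerivAt u f (t + 0) := by simpa [hf] using hu.hasDerivAt
    have h2 : HasDerivAt (fun s => U (θ s)) v (t + 0) := by
      simpa [hv, hθdot, Function.comp_def] using hU.hasFDerivAt.comp_hasDerivAt t hθ.hasDerivAt
    exact (h1.comp_const_add t 0).prodMk (h2.comp_const_add t 0)
  have hslope : Tendsto (fun h : ℝ => h⁻¹ • (X h - (u t, u t))) (𝓝[≠] 0) (𝓝 (f, v)) := by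
    simpa [hX0] using hXd.tendsto_slope_zero
  have hquad : Tendsto (fun h : ℝ => (1 / 2) *
      D2R (h⁻¹ • (X h - (u t, u t))) (h⁻¹ • (X h - (u t, u t)))) (𝓝[≠] 0)
      (𝓝 ((1 / 2) * D2R (f, v) (f, v))) :=
    ((by fun_prop : Continuous fun y : H × H => (1 / 2) * D2R y y).tendsto (f, v)).comp hslope
  have hrem : Tendsto (fun h : ℝ => (h ^ 2)⁻¹ *
      (R (X h) - (1 / 2) * D2R (X h - (u t, u t)) (X h - (u t, u t)))) (𝓝[≠] 0) (𝓝 0) := by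
    have hXt : Tendsto X (𝓝 0) (𝓝 (u t, u t)) := hX0 ▸ hXd.continuousAt.tendsto
    have ho := (isLittleO_sub_half_fderiv_fderiv hR hR0 hDR).comp_tendsto hXt
    have hO : (fun h => X h - (u t, u t)) =O[𝓝 0] fun h : ℝ => h := by
      simpa [hX0] using hXd.isBigO_sub
    have h := (ho.trans_isBigO (hO.norm_left.pow 2)).mono
      (nhdsWithin_le_nhds (s := {(0 : ℝ)}ᶜ))
    rw [hD2R]
    simpa [Function.comp_def, div_eq_inv_mul, -map_sub] using h.tendsto_div_nhds_zero
  have hvsum : ((f, v) : H × H) = (f, 0) + ∑ i, θdot i • ((0, dU i) : H × H) := by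
    have hθs : θdot = ∑ i, θdot i • EuclideanSpace.single i (1 : ℝ) := by
      simpa using ((EuclideanSpace.basisFun (Fin p) ℝ).sum_repr θdot).symm
    have hvs : v = ∑ i, θdot i • dU i := by
      rw [hv]
      conv_lhs => rw [hθs]
      simp [hdU]
    ext <;> simp [hvs, Prod.fst_sum, Prod.snd_sum]
  have hval : (1 / 2) * (∑ i, ∑ j, θdot i * M i j * θdot j)
      + (∑ i, F i * θdot i) + (1 / 2) * b = (1 / 2) * D2R (f, v) (f, v) := by
    have hs : ∀ i, D2R (0, dU i) (f, 0) = D2R (f, 0) (0, dU i) := fun i => by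
      rw [hD2R]; exact hD2 _ _
    have e1 : ∑ i, ∑ j, θdot i * M i j * θdot j =
        D2R (∑ i, θdot i • ((0, dU i) : H × H)) (∑ i, θdot i • ((0, dU i) : H × H)) := by
      simp only [map_sum, map_smul, sum_apply, smul_apply,
        smul_eq_mul, hM, Finset.mul_sum]
      rw [Finset.sum_comm]
      exact Finset.sum_congr rfl fun i _ => Finset.sum_congr rfl fun j _ => by ring
    have e2 : ∑ i, F i * θdot i = D2R (f, 0) (∑ i, θdot i • ((0, dU i) : H × H)) := by
      simp only [map_sum, map_smul, smul_eq_mul, hF, mul_comm]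
    have e3 : ∑ i, F i * θdot i = D2R (∑ i, θdot i • ((0, dU i) : H × H)) (f, 0) := by
      simp only [map_sum, map_smul, sum_apply, smul_apply,
        smul_eq_mul, hF, hs, mul_comm]
    simp only [hvsum, map_add, add_apply]
    rw [← e1, ← e2, ← e3, ← hb]
    ring
  rw [hval]
  have hsum := hrem.add hquad
  rw [zero_add] at hsum
  refine hsum.congr fun h => ?_
  simp only [map_smul, smul_apply, smul_eq_mul, hX]
  ring
end

section
/- Define u : ℝ × ℝᵈ → ℝ by u(t, y) = u₀((Φ(t, ·))⁻¹(y)), and assume u is Fréchet differentiable on ℝ × ℝᵈ. Then u(0, ·) = u₀ and u solves the advection equation ∂_t u(t, y) + ⟨a(t, y), ∇_y u(t, y)⟩ = 0 for all (t, y) ∈ ℝ × ℝᵈ. -/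
/-!
Along a characteristic `s ↦ Φ s x` the function `u` has the constant value `u₀ x`. Since `Φ t` is
onto, every `y` is `Φ t x` for some `x`; differentiating `u s (Φ s x) = u₀ x` at `s = t` with the
chain rule gives `L (1, a t y) = 0`, where `L` is the Fréchet derivative of `u` at `(t, y)`.
Splitting `(1, a t y) = (1, 0) + (0, a t y)` turns this into the advection equation.
-/

open scoped RealInnerProductSpace

/-- `u(t,y) = u₀((Φ(t,·))⁻¹(y))`, built from a characteristic flow `Φ` of the
velocity field `a`, solves the advection equation `∂ₜu + ⟨a, ∇u⟩ = 0`. -/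
theorem stmt_5 {d : ℕ}
    (a : ℝ → EuclideanSpace ℝ (Fin d) → EuclideanSpace ℝ (Fin d))
    (Φ : ℝ → EuclideanSpace ℝ (Fin d) → EuclideanSpace ℝ (Fin d))
    (hΦ0 : ∀ x, Φ 0 x = x)
    (hΦt : ∀ t x, HasDerivAt (fun s => Φ s x) (a t (Φ t x)) t)
    (hΦbij : ∀ t, Function.Bijective (Φ t))
    (u₀ : EuclideanSpace ℝ (Fin d) → ℝ)
    (u : ℝ → EuclideanSpace ℝ (Fin d) → ℝ)
    (hu : u = fun t y => u₀ (Function.invFun (Φ t) y))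
    (hudiff : Differentiable ℝ (fun q : ℝ × EuclideanSpace ℝ (Fin d) => u q.1 q.2)) :
    (∀ y, u 0 y = u₀ y) ∧
    (∀ t y, deriv (fun s => u s y) t + ⟪a t y, gradient (u t) y⟫ = 0) := by
  have hconst : ∀ s x, u s (Φ s x) = u₀ x := fun s x => by
    rw [hu]
    exact congrArg u₀ (Function.leftInverse_invFun (hΦbij s).injective x)
  refine ⟨fun y => by simpa only [hΦ0] using hconst 0 y, fun t y => ?_⟩
  obtain ⟨x, rfl⟩ := (hΦbij t).surjective y
  set v := a t (Φ t x)
  have hL := (hudiff (t, Φ t x)).hasFDerivAt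
  set L := fderiv ℝ (fun q : ℝ × EuclideanSpace ℝ (Fin d) => u q.1 q.2) (t, Φ t x)
  have hchar : L (1, v) = 0 := by
    have h := hL.comp_hasDerivAt t ((hasDerivAt_id t).prodMk (hΦt t x))
    refine h.unique ((hasDerivAt_const t (u₀ x)).congr_of_eventuallyEq ?_)
    exact Filter.Eventually.of_forall fun s => hconst s x
  have htime : deriv (fun s => u s (Φ t x)) t = L (1, 0) := by
    have h := hL.comp_hasDerivAt t ((hasDerivAt_id t).prodMk (hasDerivAt_const t (Φ t x)))
    exact h.deriv
  have hspace : ⟪v, gradient (u t) (Φ t x)⟫ = L (0, v) := by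
    have h : HasFDerivAt (u t) _ (Φ t x) :=
      hL.comp (Φ t x) ((hasFDerivAt_const t (Φ t x)).prodMk (hasFDerivAt_id (Φ t x)))
    rw [real_inner_comm, gradient, InnerProductSpace.toDual_symm_apply, h.fderiv]
    simp
  rw [htime, hspace, ← map_add]
  simpa using hchar
end

section
/- Suppose u : ℝ × ℝᵈ → ℝ satisfies: (i) for every t, the function x ↦ u(t, x) is a Schwartz function on ℝᵈ, is nonnegative, and satisfies ∫_{ℝᵈ} u(t, x) dx = 1; (ii) u is differentiable in t at every point and the Fokker–Planck equation holds pointwise; (iii) for each i ∈ {1, …, d}, the function t ↦ ∫_{ℝᵈ} x_i u(t, x) dx is differentiable with derivative ∫_{ℝᵈ} x_i ∂_t u(t, x) dx. Define the mean X̄_i(t) = ∫_{ℝᵈ} x_i u(t, x) dx. Then for every t ∈ ℝ and every i ∈ {1, …, d}: d/dt X̄_i(t) = −(1 + α) X̄_i(t) + a(t) + (α/d) ∑_{j=1}^d X̄_j(t). -/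
/-!
Write `u t` for the density at time `t` and `p j = u t * h_j` for the `j`-th component of its drift
flux. Since `h_j` is affine in `x`, each `p j` is again a Schwartz function, so the right-hand side
of the Fokker–Planck equation is a sum of directional derivatives of Schwartz functions.
Integrating by parts against the coordinate `x_i` gives `∫ x_i ∂_j f = -δ_ij ∫ f`
(`integral_coord_mul_lineDeriv`), which turns the drift part into `∫ u t * h_i` and the diffusion
part into `-D ∫ ∂_i (u t) = 0` (`integral_lineDeriv_eq_zero`). Finally `∫ u t * h_i` is evaluated
by linearity, using that `u t` has total mass one.
-/

open MeasureTheory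
open SchwartzMap
open scoped LineDeriv SchwartzMap

lemma coord_hasTemperateGrowth {d : ℕ} (i : Fin d) :
    (fun x : EuclideanSpace ℝ (Fin d) => x i).HasTemperateGrowth :=
  (EuclideanSpace.proj i : EuclideanSpace ℝ (Fin d) →L[ℝ] ℝ).hasTemperateGrowth

lemma integrable_coord_mul {d : ℕ} (f : 𝓢(EuclideanSpace ℝ (Fin d), ℝ)) (i : Fin d) :
    Integrable (fun x => x i * f x) := by
  have := (smulLeftCLM ℝ (fun x : EuclideanSpace ℝ (Fin d) => x i) f).integrable (μ := volume)
  simpa [smulLeftCLM_apply (coord_hasTemperateGrowth i)] using this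

lemma integral_lineDeriv_eq_zero {d : ℕ} (f : 𝓢(EuclideanSpace ℝ (Fin d), ℝ))
    (v : EuclideanSpace ℝ (Fin d)) : ∫ x, (∂_{v} f) x = 0 := by
  have key := integral_mul_fderiv_eq_neg_fderiv_mul_of_integrable (μ := volume) (v := v)
    (f := fun _ : EuclideanSpace ℝ (Fin d) => (1 : ℝ)) (g := f)
    (by simp) (by simpa [lineDerivOp_apply_eq_fderiv] using (∂_{v} f).integrable (μ := volume))
    (by simpa using f.integrable (μ := volume)) (fun x _ => by fun_prop)
    (fun x _ => f.differentiableAt)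
  simpa [lineDerivOp_apply_eq_fderiv] using key

/-- Integration by parts against a coordinate: the boundary terms vanish because `f` is Schwartz,
and `∂_j x_i = δ_ij`. -/
lemma integral_coord_mul_lineDeriv {d : ℕ} (f : 𝓢(EuclideanSpace ℝ (Fin d), ℝ)) (i j : Fin d) :
    ∫ x, x i * (∂_{EuclideanSpace.single j (1 : ℝ)} f) x = -(if i = j then ∫ x, f x else 0) := by
  have hfd (x : EuclideanSpace ℝ (Fin d)) :
      fderiv ℝ (fun x : EuclideanSpace ℝ (Fin d) => x i) x (EuclideanSpace.single j (1 : ℝ))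
        = if i = j then 1 else 0 := by
    have h1 : HasFDerivAt (fun x : EuclideanSpace ℝ (Fin d) => x i)
      (EuclideanSpace.proj i : EuclideanSpace ℝ (Fin d) →L[ℝ] ℝ) x :=
      (EuclideanSpace.proj i : EuclideanSpace ℝ (Fin d) →L[ℝ] ℝ).hasFDerivAt
    rw [h1.fderiv]
    simp
  have key := integral_mul_fderiv_eq_neg_fderiv_mul_of_integrable (μ := volume)
    (v := EuclideanSpace.single j (1 : ℝ))
    (f := fun x : EuclideanSpace ℝ (Fin d) => x i) (g := f)
    (by simp only [hfd]; exact (f.integrable (μ := volume)).const_mul _)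
    (by simpa [lineDerivOp_apply_eq_fderiv] using
      integrable_coord_mul (∂_{EuclideanSpace.single j (1 : ℝ)} f) i)
    (integrable_coord_mul f i) (fun x _ => by fun_prop) (fun x _ => f.differentiableAt)
  simp only [hfd, integral_const_mul] at key
  simpa [lineDerivOp_apply_eq_fderiv] using key

/-- evolution of the mean of the solution of the Fokker–Planck equation for
interacting particles in a (moving) harmonic trap. -/
theorem stmt_9 (d : ℕ) (hd : 1 ≤ d) (α D : ℝ) (hD : 0 < D)
    (a : ℝ → ℝ) (ha : Continuous a)
    (h : ℝ → EuclideanSpace ℝ (Fin d) → Fin d → ℝ)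
    (hh : ∀ t x i, h t x i = a t - x i + (α / d) * ∑ j, (x j - x i))
    (u : ℝ → SchwartzMap (EuclideanSpace ℝ (Fin d)) ℝ)
    (hpos : ∀ t x, 0 ≤ u t x)
    (hnorm : ∀ t, ∫ x, u t x = 1)
    (hFP : ∀ t x, HasDerivAt (fun s => u s x)
      (∑ i, (-(fderiv ℝ (fun y => u t y * h t y i) x (EuclideanSpace.single i 1))
        + D * fderiv ℝ (fun y => fderiv ℝ (fun z => u t z) y (EuclideanSpace.single i 1)) x
            (EuclideanSpace.single i 1))) t)
    (hmoment : ∀ t i, HasDerivAt (fun s => ∫ x, x i * u s x)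
      (∫ x : EuclideanSpace ℝ (Fin d), x i * deriv (fun s => u s x) t) t)
    (Xbar : ℝ → Fin d → ℝ)
    (hXbar : ∀ t i, Xbar t i = ∫ x : EuclideanSpace ℝ (Fin d), x i * u t x) :
    ∀ t i, HasDerivAt (fun s => Xbar s i)
      (-(1 + α) * Xbar t i + a t + (α / d) * ∑ j, Xbar t j) t := by
  intro t i
  have hd0 : (d : ℝ) ≠ 0 := by positivity
  have hcoord (j : Fin d) := coord_hasTemperateGrowth j
  have hgrowth (j : Fin d) : (fun x => h t x j).HasTemperateGrowth := by
    simp only [hh]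
    fun_prop
  set p : Fin d → 𝓢(EuclideanSpace ℝ (Fin d), ℝ) :=
    fun j => smulLeftCLM ℝ (fun x => h t x j) (u t) with hp
  have hpx (j : Fin d) : (p j : EuclideanSpace ℝ (Fin d) → ℝ) = fun y => u t y * h t y j := by
    funext y
    simp [hp, smulLeftCLM_apply_apply (hgrowth j), mul_comm]
  have hderiv (x : EuclideanSpace ℝ (Fin d)) : deriv (fun s => u s x) t =
      ∑ j, (-(∂_{EuclideanSpace.single j (1 : ℝ)} (p j)) x
        + D * (∂_{EuclideanSpace.single j (1 : ℝ)}
            (∂_{EuclideanSpace.single j (1 : ℝ)} (u t))) x) := by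
    rw [(hFP t x).deriv]
    refine Finset.sum_congr rfl fun j _ => ?_
    have h2 : ⇑(∂_{EuclideanSpace.single j (1 : ℝ)} (u t) : 𝓢(EuclideanSpace ℝ (Fin d), ℝ)) =
        fun y => fderiv ℝ (fun z => u t z) y (EuclideanSpace.single j 1) := by
      funext y
      exact lineDerivOp_apply_eq_fderiv _ _ _
    rw [lineDerivOp_apply_eq_fderiv, lineDerivOp_apply_eq_fderiv, hpx, h2]
  have hint : ∫ x : EuclideanSpace ℝ (Fin d), x i * deriv (fun s => u s x) t = ∫ x, p i x := by
    have hi1 (j : Fin d) : Integrable fun x : EuclideanSpace ℝ (Fin d) =>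
        -(x i * (∂_{EuclideanSpace.single j (1 : ℝ)} (p j)) x) :=
      (integrable_coord_mul (∂_{EuclideanSpace.single j (1 : ℝ)} (p j)) i).neg
    have hi2 (j : Fin d) := (integrable_coord_mul (∂_{EuclideanSpace.single j (1 : ℝ)}
      (∂_{EuclideanSpace.single j (1 : ℝ)} (u t))) i).const_mul D
    calc ∫ x : EuclideanSpace ℝ (Fin d), x i * deriv (fun s => u s x) t
        = ∫ x : EuclideanSpace ℝ (Fin d),
          ∑ j, (-(x i * (∂_{EuclideanSpace.single j (1 : ℝ)} (p j)) x)
            + D * (x i * (∂_{EuclideanSpace.single j (1 : ℝ)}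
              (∂_{EuclideanSpace.single j (1 : ℝ)} (u t))) x)) := by
          refine integral_congr_ae (.of_forall fun x => ?_)
          simp only [hderiv, Finset.mul_sum]
          exact Finset.sum_congr rfl fun j _ => by ring
      _ = ∑ j, if i = j then ∫ x, p j x else 0 := by
          rw [integral_finsetSum _ fun j _ => (hi1 j).fun_add (hi2 j)]
          refine Finset.sum_congr rfl fun j _ => ?_
          rw [integral_add (hi1 j) (hi2 j), integral_neg, integral_const_mul,
            integral_coord_mul_lineDeriv, integral_coord_mul_lineDeriv,
            integral_lineDeriv_eq_zero]
          simp
      _ = ∫ x, p i x := by simp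
  have hflux : ∫ x, p i x = -(1 + α) * Xbar t i + a t + (α / d) * ∑ j, Xbar t j := by
    have hx (j : Fin d) := integrable_coord_mul (u t) j
    have hu := (u t).integrable (μ := volume)
    have e (x : EuclideanSpace ℝ (Fin d)) : p i x =
        (-(1 + α) * (x i * u t x) + a t * u t x) + (α / d) * ∑ j, x j * u t x := by
      simp only [hpx, hh, Finset.sum_sub_distrib, Finset.sum_const, Finset.card_univ,
        Fintype.card_fin, nsmul_eq_mul, ← Finset.sum_mul]
      field_simp
      ring
    simp only [e, hXbar]
    rw [integral_add (((hx i).const_mul _).fun_add (hu.const_mul _))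
        ((integrable_finsetSum _ fun j _ => hx j).const_mul _),
      integral_add ((hx i).const_mul _) (hu.const_mul _), integral_const_mul, integral_const_mul,
      integral_const_mul, hnorm, integral_finsetSum _ fun j _ => hx j, mul_one]
  rw [← hflux, ← hint]
  simp only [hXbar]
  exact hmoment t i
end

section
/- Let m : ℝ → ℝᵈ and C : ℝ → ℝ^{d×d} be differentiable, with C(t) symmetric positive definite for every t, and suppose they satisfy the moment ODEs: m′_i(t) = −(1 + α) m_i(t) + a(t) + (α/d) ∑_{j=1}^d m_j(t) for all i, and C′_{ij}(t) = −2(1 + α) C_{ij}(t) + (α/d) ∑_{k=1}^d ( C_{kj}(t) + C_{ki}(t) ) + 2D δ_{ij} for all i, j, where δ_{ij} is the Kronecker delta. Define the Gaussian density u(t, x) = (2π)^{−d/2} (det C(t))^{−1/2} exp( −½ ⟨ x − m(t), C(t)⁻¹ (x − m(t)) ⟩ ). Then u satisfies the Fokker–Planck equation pointwise for all (t, x) ∈ ℝ × ℝᵈ. -/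
/-!
Writing `A = -(1 + α) I + (α / d) J` with `J` the all-ones matrix, the drift is `h = A x + a`, and
the moment equations read `m' = A m + a`, `C' = A C + (A C)ᵀ + 2 D I`. Put `y = x - m` and
`w = C⁻¹ y`. In space, `∂ᵢ u = -wᵢ u` and `∂ᵢ² u = (wᵢ² - (C⁻¹)ᵢᵢ) u`, so the right-hand side is
`u (w · h - tr A + D |w|² - D tr C⁻¹)`. In time, Jacobi's formula `hasDerivAt_det` and the
derivative of the quadratic form `hasDerivAt_quadForm` give
`∂ₜ u = u (-½ tr (C⁻¹ C') + w · m' + ½ wᵀ C' w)`. Since `C w = y`, the equation for `C'` yields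
`tr (C⁻¹ C') = 2 tr A + 2 D tr C⁻¹` and `wᵀ C' w = 2 w · A y + 2 D |w|²`, while `h = m' + A y`;
the two sides agree.
-/


open MeasureTheory Matrix
open scoped Real

/-- Jacobi's formula for the derivative of a determinant along a matrix curve. -/
lemma hasDerivAt_det {d : ℕ} {C : ℝ → Matrix (Fin d) (Fin d) ℝ} {C' : Matrix (Fin d) (Fin d) ℝ}
    {t : ℝ} (hC : ∀ i j, HasDerivAt (fun s => C s i j) (C' i j) t) :
    HasDerivAt (fun s => (C s).det) (((C t).adjugate * C').trace) t := by
  have h1 : ∀ i, ((C t).adjugate * C') i i = ((C t).updateCol i (fun k => C' k i)).det := by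
    intro i
    rw [← cramer_apply, cramer_eq_adjugate_mulVec]
    rfl
  have h2 : ((C t).adjugate * C').trace =
      ∑ σ : Equiv.Perm (Fin d), ((Equiv.Perm.sign σ : ℤ) : ℝ) *
        ∑ i, (∏ j ∈ Finset.univ.erase i, C t (σ j) j) * C' (σ i) i := by
    simp only [Matrix.trace, Matrix.diag, h1, Matrix.det_apply', Finset.mul_sum]
    rw [Finset.sum_comm]
    refine Finset.sum_congr rfl fun σ _ => Finset.sum_congr rfl fun i _ => ?_
    congr 1
    rw [← Finset.prod_erase_mul _ _ (Finset.mem_univ i)]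
    congr 1
    · refine Finset.prod_congr rfl fun j hj => ?_
      rw [Matrix.updateCol_ne (Finset.ne_of_mem_erase hj)]
    · simp
  rw [h2]
  simp only [Matrix.det_apply']
  refine HasDerivAt.fun_sum fun σ _ => HasDerivAt.const_mul _ ?_
  simpa [smul_eq_mul] using HasDerivAt.fun_finsetProd
    (u := Finset.univ) (fun i _ => hC (σ i) i)

/-- The entries of the inverse are differentiable by Cramer's rule; the value of the derivative
is then forced by differentiating `C⁻¹ * C = 1`. -/
lemma hasDerivAt_inv_apply {d : ℕ} {C : ℝ → Matrix (Fin d) (Fin d) ℝ}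
    {C' : Matrix (Fin d) (Fin d) ℝ} {t : ℝ} (hdet : ∀ s, (C s).det ≠ 0)
    (hC : ∀ i j, HasDerivAt (fun s => C s i j) (C' i j) t) (i j : Fin d) :
    HasDerivAt (fun s => (C s)⁻¹ i j) ((-((C t)⁻¹ * C' * (C t)⁻¹)) i j) t := by
  have hadj : ∀ i j, DifferentiableAt ℝ (fun s => (C s).adjugate i j) t := by
    intro i j
    simp only [Matrix.adjugate_apply]
    refine (hasDerivAt_det (C' := C'.updateRow j 0) fun k l => ?_).differentiableAt
    by_cases hk : k = j
    · subst hk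
      simpa using hasDerivAt_const t _
    · simpa [Matrix.updateRow_ne hk] using hC k l
  have hdiff : ∀ i j, DifferentiableAt ℝ (fun s => (C s)⁻¹ i j) t := by
    intro i j
    simp only [Matrix.inv_def, Matrix.smul_apply, Ring.inverse_eq_inv', smul_eq_mul]
    exact ((hasDerivAt_det hC).differentiableAt.inv (hdet t)).mul (hadj i j)
  let P' : Matrix (Fin d) (Fin d) ℝ := fun i j => deriv (fun s => (C s)⁻¹ i j) t
  have hP' : ∀ i j, HasDerivAt (fun s => (C s)⁻¹ i j) (P' i j) t :=
    fun i j => (hdiff i j).hasDerivAt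
  have hprod : P' * C t + (C t)⁻¹ * C' = 0 := by
    ext k l
    have h1 : HasDerivAt (fun s => ((C s)⁻¹ * C s) k l) ((P' * C t + (C t)⁻¹ * C') k l) t := by
      simp only [Matrix.mul_apply, Matrix.add_apply, ← Finset.sum_add_distrib]
      exact HasDerivAt.fun_sum fun n _ => (hP' k n).mul (hC n l)
    have h2 : (fun s => ((C s)⁻¹ * C s) k l) =
        fun _ => (1 : Matrix (Fin d) (Fin d) ℝ) k l := by
      funext s
      rw [Matrix.nonsing_inv_mul _ (hdet s).isUnit]
    rw [h2] at h1
    exact h1.unique (hasDerivAt_const t _)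
  have hval : P' = -((C t)⁻¹ * C' * (C t)⁻¹) := by
    have h1 : (P' * C t + (C t)⁻¹ * C') * (C t)⁻¹ = 0 := by rw [hprod, Matrix.zero_mul]
    rw [Matrix.add_mul, Matrix.mul_assoc P', Matrix.mul_nonsing_inv _ (hdet t).isUnit,
      Matrix.mul_one] at h1
    exact eq_neg_of_add_eq_zero_left h1
  rw [← hval]
  exact hP' i j

/-- With `w = C⁻¹ y` and `C` symmetric, `(yᵀ C⁻¹ y)' = 2 wᵀ y' - wᵀ C' w`. -/
lemma hasDerivAt_quadForm {d : ℕ} {C : ℝ → Matrix (Fin d) (Fin d) ℝ}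
    {C' : Matrix (Fin d) (Fin d) ℝ} {y : ℝ → Fin d → ℝ} {y' : Fin d → ℝ} {t : ℝ}
    (hdet : ∀ s, (C s).det ≠ 0) (hsymm : (C t).IsSymm)
    (hC : ∀ i j, HasDerivAt (fun s => C s i j) (C' i j) t)
    (hy : ∀ i, HasDerivAt (fun s => y s i) (y' i) t) :
    HasDerivAt (fun s => y s ⬝ᵥ (C s)⁻¹ *ᵥ y s)
      (2 * ((C t)⁻¹ *ᵥ y t ⬝ᵥ y') - (C t)⁻¹ *ᵥ y t ⬝ᵥ C' *ᵥ ((C t)⁻¹ *ᵥ y t)) t := by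
  have hPs : ((C t)⁻¹)ᵀ = (C t)⁻¹ := by rw [Matrix.transpose_nonsing_inv, hsymm.eq]
  have hw : ∀ i, HasDerivAt (fun s => ((C s)⁻¹ *ᵥ y s) i)
      (((-((C t)⁻¹ * C' * (C t)⁻¹)) *ᵥ y t + (C t)⁻¹ *ᵥ y') i) t := by
    intro i
    simp only [Matrix.mulVec, dotProduct, Pi.add_apply, ← Finset.sum_add_distrib]
    exact HasDerivAt.fun_sum fun j _ => (hasDerivAt_inv_apply hdet hC i j).mul (hy j)
  have hmain : HasDerivAt (fun s => y s ⬝ᵥ (C s)⁻¹ *ᵥ y s)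
      (y' ⬝ᵥ (C t)⁻¹ *ᵥ y t +
        y t ⬝ᵥ ((-((C t)⁻¹ * C' * (C t)⁻¹)) *ᵥ y t + (C t)⁻¹ *ᵥ y')) t := by
    simp only [dotProduct, ← Finset.sum_add_distrib]
    exact HasDerivAt.fun_sum fun i _ => (hy i).mul (hw i)
  convert hmain using 1
  have key : ∀ v, y t ⬝ᵥ (C t)⁻¹ *ᵥ v = (C t)⁻¹ *ᵥ y t ⬝ᵥ v := by
    intro v
    rw [Matrix.dotProduct_mulVec, ← Matrix.mulVec_transpose, hPs]
  rw [dotProduct_add, Matrix.neg_mulVec, dotProduct_neg, ← Matrix.mulVec_mulVec,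
    ← Matrix.mulVec_mulVec, key, key, dotProduct_comm y']
  ring

/-- The spatial gradient of the exponential of a quadratic form centred at `μ`. -/
lemma hasFDerivAt_gaussian {d : ℕ} (K : ℝ) (μ : Fin d → ℝ) (P : Matrix (Fin d) (Fin d) ℝ)
    (hP : P.IsSymm) (x : EuclideanSpace ℝ (Fin d)) :
    HasFDerivAt (fun z : EuclideanSpace ℝ (Fin d) =>
        K * Real.exp (-(1 / 2) * ((fun i => z i - μ i) ⬝ᵥ P.mulVec (fun i => z i - μ i))))
      (-(K * Real.exp (-(1 / 2) * ((fun i => x i - μ i) ⬝ᵥ P.mulVec (fun i => x i - μ i)))) •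
        ∑ k, (P.mulVec (fun i => x i - μ i) k) •
          (EuclideanSpace.proj k : EuclideanSpace ℝ (Fin d) →L[ℝ] ℝ)) x := by
  have hc : ∀ k, HasFDerivAt (fun z : EuclideanSpace ℝ (Fin d) => z k - μ k)
      (EuclideanSpace.proj k : EuclideanSpace ℝ (Fin d) →L[ℝ] ℝ) x := fun k =>
    ((EuclideanSpace.proj k : EuclideanSpace ℝ (Fin d) →L[ℝ] ℝ).hasFDerivAt).sub_const _
  have hq : HasFDerivAt (fun z : EuclideanSpace ℝ (Fin d) =>
      ∑ k, (z k - μ k) * ∑ l, P k l * (z l - μ l)) _ x :=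
    HasFDerivAt.fun_sum fun k _ => (hc k).mul
      (HasFDerivAt.fun_sum fun l _ => (hc l).const_mul (P k l))
  have := ((hq.const_mul (-(1 / 2))).exp).const_mul K
  refine this.congr_fderiv ?_
  ext v
  have hsw : ∑ k, (x k - μ k) * ∑ l, P k l * v l =
      ∑ k, (∑ l, P k l * (x l - μ l)) * v k := by
    simp only [Finset.mul_sum, Finset.sum_mul]
    rw [Finset.sum_comm]
    refine Finset.sum_congr rfl fun k _ => Finset.sum_congr rfl fun l _ => ?_
    rw [← hP.apply k l]
    ring
  simp [Matrix.mulVec, dotProduct, Finset.sum_add_distrib, hsw]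
  ring

/-- the Gaussian density whose mean and covariance satisfy the moment ODEs
solves the Fokker–Planck equation for interacting particles in a harmonic trap. -/
theorem stmt_11 (d : ℕ) (hd : 1 ≤ d) (α D : ℝ) (hD : 0 < D)
    (a : ℝ → ℝ) (ha : Continuous a)
    (h : ℝ → EuclideanSpace ℝ (Fin d) → Fin d → ℝ)
    (hh : ∀ t x i, h t x i = a t - x i + (α / d) * ∑ j, (x j - x i))
    (m : ℝ → Fin d → ℝ) (C : ℝ → Matrix (Fin d) (Fin d) ℝ)
    (hCsymm : ∀ t, (C t).IsSymm) (hCpos : ∀ t, (C t).PosDef)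
    (hmODE : ∀ t i, HasDerivAt (fun s => m s i)
      (-(1 + α) * m t i + a t + (α / d) * ∑ j, m t j) t)
    (hCODE : ∀ t i j, HasDerivAt (fun s => C s i j)
      (-2 * (1 + α) * C t i j + (α / d) * ∑ k, (C t k j + C t k i)
        + 2 * D * (if i = j then (1:ℝ) else 0)) t)
    (u : ℝ → EuclideanSpace ℝ (Fin d) → ℝ)
    (hu : u = fun t x =>
      (2 * π) ^ (-(d : ℝ) / 2) * ((C t).det) ^ (-(1 : ℝ) / 2) *
        Real.exp (-(1 / 2) *
          ((fun i => x i - m t i) ⬝ᵥ (C t)⁻¹.mulVec (fun i => x i - m t i)))) :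
    ∀ t x, HasDerivAt (fun s => u s x)
      (∑ i, (-(fderiv ℝ (fun y => u t y * h t y i) x (EuclideanSpace.single i 1))
        + D * fderiv ℝ (fun y => fderiv ℝ (fun z => u t z) y (EuclideanSpace.single i 1)) x
            (EuclideanSpace.single i 1))) t := by
  intro t x
  have hdet : ∀ s, (C s).det ≠ 0 := fun s => (hCpos s).det_pos.ne'
  have hPs : ((C t)⁻¹).IsSymm := by
    rw [Matrix.IsSymm, Matrix.transpose_nonsing_inv, (hCsymm t).eq]
  have hd0 : (d : ℝ) ≠ 0 := by positivity
  -- `A` is the drift matrix: `h = A x + a`, `m' = A m + a`, `C' = A C + C Aᵀ + 2D`.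
  obtain ⟨C', hC'⟩ : ∃ C' : Matrix (Fin d) (Fin d) ℝ, C' = fun i j =>
      (-2 * (1 + α) * C t i j + (α / d) * ∑ k, (C t k j + C t k i)
        + 2 * D * (if i = j then (1:ℝ) else 0)) := ⟨_, rfl⟩
  obtain ⟨A, hA⟩ : ∃ A : Matrix (Fin d) (Fin d) ℝ, A =
      -(1 + α) • (1 : Matrix (Fin d) (Fin d) ℝ) + (α / d) • Matrix.of (fun _ _ => (1 : ℝ)) :=
    ⟨_, rfl⟩
  obtain ⟨m', hm'⟩ : ∃ m' : Fin d → ℝ, m' = fun i =>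
      -(1 + α) * m t i + a t + (α / d) * ∑ j, m t j := ⟨_, rfl⟩
  have hAv : ∀ (v : Fin d → ℝ) i, (A *ᵥ v) i = -(1 + α) * v i + (α / d) * ∑ j, v j := by
    intro v i
    rw [hA, Matrix.add_mulVec, Matrix.smul_mulVec, Matrix.smul_mulVec, Matrix.one_mulVec]
    simp [Matrix.mulVec, dotProduct]
  have hCd : ∀ i j, HasDerivAt (fun s => C s i j) (C' i j) t := by
    intro i j; rw [hC']; exact hCODE t i j
  have hC'A : C' = A * C t + (A * C t)ᵀ + (2 * D) • (1 : Matrix (Fin d) (Fin d) ℝ) := by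
    have hAC : ∀ i j, (A * C t) i j = -(1 + α) * C t i j + (α / d) * ∑ k, C t k j := by
      intro i j
      exact hAv (fun k => C t k j) i
    ext i j
    rw [hC']
    simp only [Matrix.add_apply, Matrix.transpose_apply, hAC, Matrix.smul_apply,
      Matrix.one_apply, smul_eq_mul, Finset.sum_add_distrib, (hCsymm t).apply i j]
    ring
  obtain ⟨y, hy⟩ : ∃ y : Fin d → ℝ, y = fun i => x i - m t i := ⟨_, rfl⟩
  obtain ⟨w, hw⟩ : ∃ w : Fin d → ℝ, w = (C t)⁻¹ *ᵥ y := ⟨_, rfl⟩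
  have hCw : C t *ᵥ w = y := by
    rw [hw, Matrix.mulVec_mulVec, Matrix.mul_nonsing_inv _ (hdet t).isUnit, Matrix.one_mulVec]
  have hdrift : ∀ i, h t x i = m' i + (A *ᵥ y) i := by
    intro i
    rw [hh, hAv, hm', hy]
    simp only [Finset.sum_sub_distrib, Finset.sum_const, Finset.card_univ, Fintype.card_fin,
      nsmul_eq_mul]
    field_simp
    ring
  have hquad : w ⬝ᵥ C' *ᵥ w = 2 * (w ⬝ᵥ A *ᵥ y) + 2 * D * (w ⬝ᵥ w) := by
    rw [hC'A, Matrix.add_mulVec, Matrix.add_mulVec, dotProduct_add, dotProduct_add,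
      Matrix.mulVec_transpose, dotProduct_comm w (w ᵥ* _), ← Matrix.dotProduct_mulVec,
      ← Matrix.mulVec_mulVec, hCw, Matrix.smul_mulVec, Matrix.one_mulVec, dotProduct_smul,
      smul_eq_mul]
    ring
  have htr : ((C t)⁻¹ * C').trace = 2 * (-(1 + α) * d + α) + 2 * D * ((C t)⁻¹).trace := by
    have htA : A.trace = -(1 + α) * d + α := by
      rw [hA, Matrix.trace_add, Matrix.trace_smul, Matrix.trace_smul, Matrix.trace_one]
      simp [Matrix.trace]
      field_simp
    have h1 : ((C t)⁻¹ * (A * C t)).trace = A.trace := by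
      rw [Matrix.trace_mul_comm, Matrix.mul_assoc, Matrix.mul_nonsing_inv _ (hdet t).isUnit,
        Matrix.mul_one]
    have h2 : ((C t)⁻¹ * (A * C t)ᵀ).trace = A.trace := by
      rw [← Matrix.trace_transpose, Matrix.transpose_mul, Matrix.transpose_transpose, hPs.eq,
        Matrix.mul_assoc, Matrix.mul_nonsing_inv _ (hdet t).isUnit, Matrix.mul_one]
    rw [hC'A, Matrix.mul_add, Matrix.mul_add, Matrix.trace_add, Matrix.trace_add, h1, h2,
      Matrix.mul_smul, Matrix.mul_one, Matrix.trace_smul, htA, smul_eq_mul]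
    ring
  have hgrad : ∀ z, HasFDerivAt (fun z => u t z) (-(u t z) •
      ∑ k, (((C t)⁻¹ *ᵥ fun i => z i - m t i) k) •
        (EuclideanSpace.proj k : EuclideanSpace ℝ (Fin d) →L[ℝ] ℝ)) z := by
    intro z
    rw [hu]
    exact hasFDerivAt_gaussian _ (m t) _ hPs z
  have hpart : ∀ z i, fderiv ℝ (fun z => u t z) z (EuclideanSpace.single i 1) =
      -(u t z) * ((C t)⁻¹ *ᵥ fun i => z i - m t i) i := by
    intro z i
    rw [(hgrad z).fderiv]
    simp
  have hsecond : ∀ i, fderiv ℝ (fun z => fderiv ℝ (fun z => u t z) z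
      (EuclideanSpace.single i 1)) x (EuclideanSpace.single i 1) =
      u t x * (w i ^ 2 - (C t)⁻¹ i i) := by
    intro i
    simp only [hpart]
    have hwd : HasFDerivAt (fun z : EuclideanSpace ℝ (Fin d) =>
        ((C t)⁻¹ *ᵥ fun i => z i - m t i) i)
        (∑ l, (C t)⁻¹ i l • (EuclideanSpace.proj l : EuclideanSpace ℝ (Fin d) →L[ℝ] ℝ)) x := by
      simp only [Matrix.mulVec, dotProduct]
      exact HasFDerivAt.fun_sum fun l _ =>
        (((EuclideanSpace.proj l : EuclideanSpace ℝ (Fin d) →L[ℝ] ℝ).hasFDerivAt).sub_const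
          (m t l)).const_mul ((C t)⁻¹ i l)
    rw [((hgrad x).fun_neg.fun_mul hwd).fderiv]
    simp [hw, hy]
    ring
  have hflux : ∀ i, fderiv ℝ (fun z => u t z * h t z i) x (EuclideanSpace.single i 1) =
      u t x * (-1 + (α / d) * (1 - d) - w i * h t x i) := by
    intro i
    have hhd : HasFDerivAt (fun z => h t z i)
        (-(EuclideanSpace.proj i : EuclideanSpace ℝ (Fin d) →L[ℝ] ℝ) + (α / d) •
          ∑ j, ((EuclideanSpace.proj j : EuclideanSpace ℝ (Fin d) →L[ℝ] ℝ) -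
            (EuclideanSpace.proj i : EuclideanSpace ℝ (Fin d) →L[ℝ] ℝ))) x := by
      have hp : ∀ j, HasFDerivAt (fun z : EuclideanSpace ℝ (Fin d) => z j)
          (EuclideanSpace.proj j : EuclideanSpace ℝ (Fin d) →L[ℝ] ℝ) x := fun j =>
        (EuclideanSpace.proj j : EuclideanSpace ℝ (Fin d) →L[ℝ] ℝ).hasFDerivAt
      simp only [hh]
      exact ((hp i).const_sub (a t)).add
        ((HasFDerivAt.fun_sum fun j _ => (hp j).sub (hp i)).const_mul (α / d))
    rw [((hgrad x).fun_mul hhd).fderiv]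
    simp [hw, hy]
    ring
  have hQ : HasDerivAt (fun s => (fun i => x i - m s i) ⬝ᵥ (C s)⁻¹ *ᵥ (fun i => x i - m s i))
      (2 * (w ⬝ᵥ -m') - w ⬝ᵥ C' *ᵥ w) t := by
    rw [hw, hy]
    refine hasDerivAt_quadForm (y := fun s i => x i - m s i) hdet (hCsymm t) hCd fun i => ?_
    rw [hm']
    exact (hmODE t i).const_sub (x i)
  have hdetd : HasDerivAt (fun s => (C s).det ^ (-(1 : ℝ) / 2))
      ((C t).det ^ (-(1 : ℝ) / 2) * (-(1 / 2) * ((C t)⁻¹ * C').trace)) t := by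
    refine ((hasDerivAt_det hCd).rpow_const (p := -(1 : ℝ) / 2) (Or.inl (hdet t))).congr_deriv ?_
    rw [Real.rpow_sub_one (hdet t), Matrix.inv_def, Ring.inverse_eq_inv', Matrix.smul_mul,
      Matrix.trace_smul, smul_eq_mul]
    ring
  have htime : HasDerivAt (fun s => u s x)
      (u t x * (-(1 / 2) * ((C t)⁻¹ * C').trace +
        -(1 / 2) * (2 * (w ⬝ᵥ -m') - w ⬝ᵥ C' *ᵥ w))) t := by
    rw [hu]
    refine ((hdetd.const_mul ((2 * π) ^ (-(d : ℝ) / 2))).mul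
      ((hQ.const_mul (-(1 / 2))).exp)).congr_deriv ?_
    ring
  refine htime.congr_deriv ?_
  simp only [hflux, hsecond]
  rw [htr, hquad, dotProduct_neg]
  have hsum : ∑ i, (-(u t x * (-1 + (α / d) * (1 - d) - w i * h t x i)) +
      D * (u t x * (w i ^ 2 - (C t)⁻¹ i i))) =
      u t x * (d * (1 - (α / d) * (1 - d)) + w ⬝ᵥ m' + w ⬝ᵥ A *ᵥ y + D * (w ⬝ᵥ w)
        - D * ((C t)⁻¹).trace) := by
    have hconst : (d : ℝ) * (1 - (α / d) * (1 - d)) =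
        ∑ _i : Fin d, (1 - (α / d) * (1 - d)) := by
      rw [Finset.sum_const, Finset.card_univ, Fintype.card_fin, nsmul_eq_mul]
    rw [hconst]
    simp only [dotProduct, Matrix.trace, Matrix.diag, Finset.mul_sum,
      ← Finset.sum_add_distrib, ← Finset.sum_sub_distrib, hdrift]
    refine Finset.sum_congr rfl fun i _ => ?_
    ring
  rw [hsum]
  field_simp
  ring
end
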